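/- Let ω = (w₁,…,w_m) be a weight vector and let A₁,…,A_m be n×n positive definite complex matrices with αI ≤ A_j ≤ βI for all j, for some scalars 0 < α ≤ β. Then every X ∈ Γ(ω; A₁,…,A_m) satisfies αI ≤ X ≤ βI. -/

import Mathlib

/-!
Put `Yᵢ = Aᵢ ♯ X⁻¹`, the positive definite solution of the Riccati equation
`Yᵢ Aᵢ⁻¹ Yᵢ = X⁻¹` (`geom_riccati`). From `α I ≤ Aᵢ` one gets `α Aᵢ⁻¹ ≤ I`, and conjugating by `Yᵢ`
gives `α X⁻¹ ≤ Yᵢ²`. The logarithm is operator monotone, so `log (α X⁻¹) ≤ 2 log Yᵢ`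
(`log_smul_le`). Averaging with the weights and using `∑ wᵢ log Yᵢ = 0` yields
`log (α X⁻¹) ≤ 0`, that is `α X⁻¹ ≤ I`, that is `α I ≤ X`. The upper bound is the same argument with
all inequalities reversed.
-/

open Matrix
open scoped ComplexOrder

/-- Functional calculus for Hermitian matrices: apply `f` to the eigenvalues. -/
noncomputable def herm {n : ℕ} (f : ℝ → ℝ) (A : Matrix (Fin n) (Fin n) ℂ) :
    Matrix (Fin n) (Fin n) ℂ :=
  if hA : A.IsHermitian then
    (hA.eigenvectorUnitary : Matrix (Fin n) (Fin n) ℂ) *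
      Matrix.diagonal (fun i => (f (hA.eigenvalues i) : ℂ)) *
      (star (hA.eigenvectorUnitary : Matrix (Fin n) (Fin n) ℂ))
  else 0

/-- Square root of a positive definite matrix. -/
noncomputable def msqrt {n : ℕ} (A : Matrix (Fin n) (Fin n) ℂ) : Matrix (Fin n) (Fin n) ℂ :=
  herm Real.sqrt A

/-- Logarithm of a positive definite matrix. -/
noncomputable def mlog {n : ℕ} (A : Matrix (Fin n) (Fin n) ℂ) : Matrix (Fin n) (Fin n) ℂ :=
  herm Real.log A

/-- Real power of a positive definite matrix. -/
noncomputable def mpow {n : ℕ} (A : Matrix (Fin n) (Fin n) ℂ) (t : ℝ) :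
    Matrix (Fin n) (Fin n) ℂ :=
  herm (fun x => x ^ t) A

/-- Metric geometric mean `A ♯ B = A^{1/2} (A^{-1/2} B A^{-1/2})^{1/2} A^{1/2}`. -/
noncomputable def geom {n : ℕ} (A B : Matrix (Fin n) (Fin n) ℂ) : Matrix (Fin n) (Fin n) ℂ :=
  msqrt A * msqrt ((msqrt A)⁻¹ * B * (msqrt A)⁻¹) * msqrt A

/-- The solution set `Γ(ω; A₁,…,A_m)` of the spectral-geometric-mean equation
`∑ᵢ wᵢ log(Aᵢ ♯ X⁻¹) = 0` among positive definite matrices. -/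
noncomputable def Gamma {m n : ℕ} (w : Fin m → ℝ) (A : Fin m → Matrix (Fin n) (Fin n) ℂ) :
    Set (Matrix (Fin n) (Fin n) ℂ) :=
  {X | X.PosDef ∧ ∑ i, w i • mlog (geom (A i) X⁻¹) = 0}

open scoped MatrixOrder Matrix.Norms.L2Operator

lemma herm_eq_cfc {n : ℕ} (f : ℝ → ℝ) {A : Matrix (Fin n) (Fin n) ℂ} (hA : A.IsHermitian) :
    herm f A = cfc f A := by
  rw [hA.cfc_eq, herm, dif_pos hA, IsHermitian.cfc, Unitary.conjStarAlgAut_apply]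
  rfl

lemma mlog_eq {n : ℕ} {A : Matrix (Fin n) (Fin n) ℂ} (hA : A.IsHermitian) :
    mlog A = CFC.log A :=
  herm_eq_cfc _ hA

lemma msqrt_posDef {n : ℕ} {A : Matrix (Fin n) (Fin n) ℂ} (hA : A.PosDef) :
    (msqrt A).PosDef := by
  rw [msqrt, herm, dif_pos hA.isHermitian,
    Matrix.IsUnit.posDef_star_right_conjugate_iff (Unitary.isUnit_coe),
    Matrix.posDef_diagonal_iff]
  intro i
  exact_mod_cast Real.sqrt_pos.2 (hA.eigenvalues_pos i)

lemma msqrt_mul_self {n : ℕ} {A : Matrix (Fin n) (Fin n) ℂ} (hA : A.PosDef) :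
    msqrt A * msqrt A = A := by
  have h0 : ∀ x ∈ spectrum ℝ A, 0 ≤ x := fun x hx =>
    spectrum_nonneg_of_nonneg hA.posSemidef.nonneg hx
  have hs : IsSelfAdjoint A := hA.isHermitian
  rw [msqrt, herm_eq_cfc _ hA.isHermitian, ← cfc_mul Real.sqrt Real.sqrt A]
  conv_rhs => rw [← cfc_id ℝ A]
  exact cfc_congr fun x hx => Real.mul_self_sqrt (h0 x hx)

lemma isUnit_det_of_posDef {n : ℕ} {A : Matrix (Fin n) (Fin n) ℂ} (hA : A.PosDef) :
    IsUnit A.det :=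
  (Matrix.isUnit_iff_isUnit_det A).1 hA.isUnit

lemma posDef_conj {n : ℕ} {S B : Matrix (Fin n) (Fin n) ℂ} (hS : S.PosDef) (hB : B.PosDef) :
    (S * B * S).PosDef := by
  have := (Matrix.IsUnit.posDef_star_right_conjugate_iff hS.isUnit (x := B)).2 hB
  rwa [star_eq_conjTranspose, hS.isHermitian.eq] at this

lemma posSemidef_conj {n : ℕ} {S B : Matrix (Fin n) (Fin n) ℂ} (hS : S.PosDef)
    (hB : B.PosSemidef) : (S * B * S).PosSemidef := by
  have := hB.mul_mul_conjTranspose_same S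
  rwa [hS.isHermitian.eq] at this

lemma inner_posDef {n : ℕ} {A B : Matrix (Fin n) (Fin n) ℂ} (hA : A.PosDef) (hB : B.PosDef) :
    ((msqrt A)⁻¹ * B * (msqrt A)⁻¹).PosDef :=
  posDef_conj (msqrt_posDef hA).inv hB

lemma geom_posDef {n : ℕ} {A B : Matrix (Fin n) (Fin n) ℂ} (hA : A.PosDef) (hB : B.PosDef) :
    (geom A B).PosDef :=
  posDef_conj (msqrt_posDef hA) (msqrt_posDef (inner_posDef hA hB))

lemma inv_eq_inv_msqrt_mul {n : ℕ} {A : Matrix (Fin n) (Fin n) ℂ} (hA : A.PosDef) :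
    A⁻¹ = (msqrt A)⁻¹ * (msqrt A)⁻¹ := by
  conv_lhs => rw [← msqrt_mul_self hA]
  exact Matrix.mul_inv_rev _ _

/-- `A ♯ B` solves the Riccati equation `Y A⁻¹ Y = B`. -/
lemma geom_riccati {n : ℕ} {A B : Matrix (Fin n) (Fin n) ℂ} (hA : A.PosDef) (hB : B.PosDef) :
    geom A B * A⁻¹ * geom A B = B := by
  have hT := msqrt_mul_self (inner_posDef hA hB)
  have hu := isUnit_det_of_posDef (msqrt_posDef hA)
  rw [inv_eq_inv_msqrt_mul hA, geom]
  set S := msqrt A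
  set T := msqrt (S⁻¹ * B * S⁻¹)
  have h1 : S * S⁻¹ = 1 := Matrix.mul_nonsing_inv _ hu
  have h2 : S⁻¹ * S = 1 := Matrix.nonsing_inv_mul _ hu
  calc S * T * S * (S⁻¹ * S⁻¹) * (S * T * S)
      = S * T * (S * S⁻¹) * (S⁻¹ * S) * T * S := by simp only [mul_assoc]
    _ = S * (T * T) * S := by rw [h1, h2]; simp only [mul_assoc, one_mul]
    _ = (S * S⁻¹) * B * (S⁻¹ * S) := by rw [hT]; simp only [mul_assoc]
    _ = B := by rw [h1, h2, one_mul, mul_one]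

lemma conj_inv_msqrt {n : ℕ} {A : Matrix (Fin n) (Fin n) ℂ} (hA : A.PosDef) (c : ℝ) :
    (msqrt A)⁻¹ * (A - c • 1) * (msqrt A)⁻¹ = 1 - c • A⁻¹ := by
  have hu := isUnit_det_of_posDef (msqrt_posDef hA)
  have hAA : A = msqrt A * msqrt A := (msqrt_mul_self hA).symm
  rw [inv_eq_inv_msqrt_mul hA]
  set S := msqrt A
  have h1 : S * S⁻¹ = 1 := Matrix.mul_nonsing_inv _ hu
  have h2 : S⁻¹ * S = 1 := Matrix.nonsing_inv_mul _ hu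
  calc S⁻¹ * (A - c • 1) * S⁻¹ = (S⁻¹ * S) * (S * S⁻¹) - c • (S⁻¹ * S⁻¹) := by
        rw [hAA]; simp [mul_sub, sub_mul, mul_assoc]
    _ = _ := by rw [h1, h2, one_mul]

lemma conj_msqrt {n : ℕ} {A : Matrix (Fin n) (Fin n) ℂ} (hA : A.PosDef) (c : ℝ) :
    msqrt A * (1 - c • A⁻¹) * msqrt A = A - c • 1 := by
  have hu := isUnit_det_of_posDef (msqrt_posDef hA)
  rw [← conj_inv_msqrt hA]
  set S := msqrt A
  have h1 : S * S⁻¹ = 1 := Matrix.mul_nonsing_inv _ hu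
  have h2 : S⁻¹ * S = 1 := Matrix.nonsing_inv_mul _ hu
  calc S * (S⁻¹ * (A - c • 1) * S⁻¹) * S = (S * S⁻¹) * (A - c • 1) * (S⁻¹ * S) := by
        simp only [mul_assoc]
    _ = _ := by rw [h1, h2, one_mul, mul_one]

lemma smul_one_le_iff {n : ℕ} {A : Matrix (Fin n) (Fin n) ℂ} (hA : A.PosDef) (c : ℝ) :
    c • (1 : Matrix (Fin n) (Fin n) ℂ) ≤ A ↔ c • A⁻¹ ≤ 1 := by
  rw [Matrix.le_iff, Matrix.le_iff]
  constructor
  · intro h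
    rw [← conj_inv_msqrt hA]
    exact posSemidef_conj (msqrt_posDef hA).inv h
  · intro h
    rw [← conj_msqrt hA]
    exact posSemidef_conj (msqrt_posDef hA) h

lemma le_smul_one_iff {n : ℕ} {A : Matrix (Fin n) (Fin n) ℂ} (hA : A.PosDef) (c : ℝ) :
    A ≤ c • (1 : Matrix (Fin n) (Fin n) ℂ) ↔ 1 ≤ c • A⁻¹ := by
  rw [Matrix.le_iff, Matrix.le_iff]
  constructor
  · intro h
    rw [← neg_sub, ← conj_inv_msqrt hA, ← neg_mul, ← mul_neg, neg_sub]
    exact posSemidef_conj (msqrt_posDef hA).inv h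
  · intro h
    rw [← neg_sub, ← conj_msqrt hA, ← neg_mul, ← mul_neg, neg_sub]
    exact posSemidef_conj (msqrt_posDef hA) h

lemma geom_sq_sub {n : ℕ} {A B : Matrix (Fin n) (Fin n) ℂ} (hA : A.PosDef) (hB : B.PosDef)
    (c : ℝ) : geom A B * (1 - c • A⁻¹) * geom A B = geom A B ^ 2 - c • B := by
  simp [mul_sub, sub_mul, sq, geom_riccati hA hB]

lemma smul_posDef {n : ℕ} {B : Matrix (Fin n) (Fin n) ℂ} (hB : B.PosDef) {c : ℝ} (hc : 0 < c) :
    (c • B).PosDef :=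
  hB.smul hc

lemma log_geom_sq {n : ℕ} {Y : Matrix (Fin n) (Fin n) ℂ} (hY : Y.PosDef) :
    CFC.log (Y ^ 2) = (2 : ℝ) • mlog Y := by
  rw [CFC.log_pow' 2 Y hY.isStrictlyPositive, mlog_eq hY.isHermitian]
  norm_num [two_smul]

/-- Operator monotonicity of `log`, applied to `c B ≤ (A ♯ B)²`. -/
lemma log_smul_le {n : ℕ} {A B : Matrix (Fin n) (Fin n) ℂ} (hA : A.PosDef) (hB : B.PosDef)
    {c : ℝ} (hc : 0 < c) (h : c • (1 : Matrix (Fin n) (Fin n) ℂ) ≤ A) :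
    CFC.log (c • B) ≤ (2 : ℝ) • mlog (geom A B) := by
  rw [← log_geom_sq (geom_posDef hA hB)]
  refine CFC.log_le_log ?_ (smul_posDef hB hc).isStrictlyPositive
  rw [Matrix.le_iff, ← geom_sq_sub hA hB]
  exact posSemidef_conj (geom_posDef hA hB) ((smul_one_le_iff hA c).1 h)

/-- Operator monotonicity of `log`, applied to `(A ♯ B)² ≤ c B`. -/
lemma le_log_smul {n : ℕ} {A B : Matrix (Fin n) (Fin n) ℂ} (hA : A.PosDef) (hB : B.PosDef)
    {c : ℝ} (h : A ≤ c • (1 : Matrix (Fin n) (Fin n) ℂ)) :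
    (2 : ℝ) • mlog (geom A B) ≤ CFC.log (c • B) := by
  have hY := geom_posDef hA hB
  rw [← log_geom_sq hY]
  refine CFC.log_le_log ?_ ?_
  rotate_left
  · simpa [sq] using (posDef_conj hY Matrix.PosDef.one).isStrictlyPositive
  rw [Matrix.le_iff, ← neg_sub, ← geom_sq_sub hA hB, ← neg_mul, ← mul_neg, neg_sub]
  exact posSemidef_conj hY ((le_smul_one_iff hA c).1 h)

lemma spectrum_pos_of_posDef {n : ℕ} {B : Matrix (Fin n) (Fin n) ℂ} (hB : B.PosDef) :
    ∀ x ∈ spectrum ℝ B, 0 < x := by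
  intro x hx
  rw [hB.isHermitian.spectrum_real_eq_range_eigenvalues] at hx
  obtain ⟨i, rfl⟩ := hx
  exact hB.eigenvalues_pos i

lemma continuousOn_log_spectrum {n : ℕ} {B : Matrix (Fin n) (Fin n) ℂ} (hB : B.PosDef) :
    ContinuousOn Real.log (spectrum ℝ B) :=
  Real.continuousOn_log.mono fun x hx => (spectrum_pos_of_posDef hB x hx).ne'

lemma le_one_of_log_nonpos {n : ℕ} {B : Matrix (Fin n) (Fin n) ℂ} (hB : B.PosDef)
    (h : CFC.log B ≤ 0) : B ≤ 1 := by
  have hs : IsSelfAdjoint B := hB.isHermitian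
  rw [CFC.log, cfc_nonpos_iff Real.log B (continuousOn_log_spectrum hB) hs] at h
  rw [← cfc_id ℝ B hs, cfc_le_one_iff id B (by fun_prop) hs]
  exact fun x hx => (Real.log_nonpos_iff (spectrum_pos_of_posDef hB x hx).le).1 (h x hx)

lemma one_le_of_log_nonneg {n : ℕ} {B : Matrix (Fin n) (Fin n) ℂ} (hB : B.PosDef)
    (h : 0 ≤ CFC.log B) : 1 ≤ B := by
  have hs : IsSelfAdjoint B := hB.isHermitian
  rw [CFC.log, cfc_nonneg_iff Real.log B (continuousOn_log_spectrum hB) hs] at h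
  rw [← cfc_id ℝ B hs, one_le_cfc_iff id B (by fun_prop) hs]
  exact fun x hx => (Real.log_nonneg_iff (spectrum_pos_of_posDef hB x hx)).1 (h x hx)

theorem stmt1 {m n : ℕ} (w : Fin m → ℝ) (hw : ∀ i, 0 < w i) (hw1 : ∑ i, w i = 1)
    (A : Fin m → Matrix (Fin n) (Fin n) ℂ) (hA : ∀ i, (A i).PosDef)
    (α β : ℝ) (hα : 0 < α) (hαβ : α ≤ β)
    (hlo : ∀ i, (A i - α • (1 : Matrix (Fin n) (Fin n) ℂ)).PosSemidef)
    (hhi : ∀ i, (β • (1 : Matrix (Fin n) (Fin n) ℂ) - A i).PosSemidef) :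
    ∀ X ∈ Gamma w A,
      (X - α • (1 : Matrix (Fin n) (Fin n) ℂ)).PosSemidef ∧
      (β • (1 : Matrix (Fin n) (Fin n) ℂ) - X).PosSemidef := by
  rintro X ⟨hX, hsum⟩
  have hsum2 : ∑ i, w i • (2 : ℝ) • mlog (geom (A i) X⁻¹) = 0 := by
    simp only [smul_comm (_ : ℝ) (2 : ℝ), ← Finset.smul_sum, hsum, smul_zero]
  have hconst : ∀ L : Matrix (Fin n) (Fin n) ℂ, L = ∑ i, w i • L := fun L => by
    rw [← Finset.sum_smul, hw1, one_smul]
  constructor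
  · refine (smul_one_le_iff hX α).2 (le_one_of_log_nonpos (smul_posDef hX.inv hα) ?_)
    rw [hconst (CFC.log _), ← hsum2]
    exact Finset.sum_le_sum fun i _ =>
      smul_le_smul_of_nonneg_left (log_smul_le (hA i) hX.inv hα (hlo i)) (hw i).le
  · refine (le_smul_one_iff hX β).2
      (one_le_of_log_nonneg (smul_posDef hX.inv (hα.trans_le hαβ)) ?_)
    rw [hconst (CFC.log _), ← hsum2]
    exact Finset.sum_le_sum fun i _ =>
      smul_le_smul_of_nonneg_left (le_log_smul (hA i) hX.inv (hhi i)) (hw i).le
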